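/- Let T ≥ 2, τ ∈ {1,…,T}, z ∈ {1,…,τ−1}, α ∈ [0,1]. Suppose the file F and shares M_1,…,M_T satisfy recoverability and (α,z)-privacy (no leakage symmetry is assumed). Then Σ_{t=1}^{T} H(M_t) ≥ T·((1−α)/(τ−z))·H(F). -/

import Mathlib

/-!
Fix a set `B` of `τ - z` servers. Its complement has at least `z` elements, so it contains a set `A`
of exactly `z` servers. Privacy of `A` gives `(1 - α) H(F) ≤ H(F, M_A) - H(M_A)`. Adjoining `M_B`
and using recoverability from `A ∪ B`, which has `τ` elements, bounds the right-hand side by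
`H(M_{A ∪ B}) - H(M_A)`, which by subadditivity is at most `∑_{t ∈ B} H(M_t)`
(`le_sum_of_card_eq`). Averaging this inequality over the `T` cyclic shifts of a single `B`
(`card_mul_sum_ge`) gives the claim.

The entropy inequalities used are monotonicity (`ent_le_of_determines`) and subadditivity
(`ent_pair_le`). Both come from writing `H(X) = -∑_ω p(ω) log P(X = X(ω))`
(`ent_eq_sum_sample`); subadditivity also uses `log x ≤ x - 1`.
-/

open scoped BigOperators
open Classical

noncomputable section

/-- Probability of an event `A` under the probability mass function `p` on a finite
sample space `Ω`. -/
def prb {Ω : Type} [Fintype Ω] (p : Ω → ℝ) (A : Set Ω) : ℝ :=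
  ∑ ω, if ω ∈ A then p ω else 0

/-- Shannon entropy (in bits, base-2 logarithm) of a random variable `X` defined on a
finite sample space with probability mass function `p`, with the convention
`0 * log 0 = 0`. -/
def ent {Ω V : Type} [Fintype Ω] [Fintype V] (p : Ω → ℝ) (X : Ω → V) : ℝ :=
  -∑ v, prb p {ω | X ω = v} * Real.logb 2 (prb p {ω | X ω = v})

/-- Conditional Shannon entropy `H(X | Y) = H(X, Y) - H(Y)`. -/
def condEnt {Ω V W : Type} [Fintype Ω] [Fintype V] [Fintype W]
    (p : Ω → ℝ) (X : Ω → V) (Y : Ω → W) : ℝ :=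
  ent p (fun ω => (X ω, Y ω)) - ent p Y

/-- Mutual information `I(X ; Y) = H(X) + H(Y) - H(X, Y)`. -/
def mutInf {Ω V W : Type} [Fintype Ω] [Fintype V] [Fintype W]
    (p : Ω → ℝ) (X : Ω → V) (Y : Ω → W) : ℝ :=
  ent p X + ent p Y - ent p (fun ω => (X ω, Y ω))

/-- The tuple of shares `M_S = (M_t)_{t ∈ S}` viewed as a single random variable. -/
def shares {Ω : Type} {T : ℕ} {χ : Fin T → Type} (M : ∀ t, Ω → χ t)
    (S : Finset (Fin T)) : Ω → (∀ t : S, χ t.1) :=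
  fun ω t => M t.1 ω

theorem sum_prb_mul {Ω V : Type} [Fintype Ω] [Fintype V] (p : Ω → ℝ) (X : Ω → V) (g : V → ℝ) :
    ∑ v, prb p {ω | X ω = v} * g v = ∑ ω, p ω * g (X ω) := by
  simp only [prb, Finset.sum_mul, Set.mem_ofPred_eq]
  rw [Finset.sum_comm]
  refine Finset.sum_congr rfl fun ω _ => ?_
  simp [ite_mul]

theorem ent_eq_sum_sample {Ω V : Type} [Fintype Ω] [Fintype V] (p : Ω → ℝ) (X : Ω → V) :
    ent p X = -∑ ω, p ω * Real.logb 2 (prb p {ω' | X ω' = X ω}) := by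
  rw [ent, sum_prb_mul p X (fun v => Real.logb 2 (prb p {ω | X ω = v}))]

theorem prb_mono {Ω : Type} [Fintype Ω] {p : Ω → ℝ} (hp0 : ∀ ω, 0 ≤ p ω) {A B : Set Ω}
    (h : A ⊆ B) : prb p A ≤ prb p B := by
  refine Finset.sum_le_sum fun ω _ => ?_
  by_cases hA : ω ∈ A
  · simp [hA, h hA]
  · simp only [hA, if_false]
    split_ifs
    exacts [hp0 ω, le_rfl]

theorem prb_nonneg {Ω : Type} [Fintype Ω] {p : Ω → ℝ} (hp0 : ∀ ω, 0 ≤ p ω) (A : Set Ω) :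
    0 ≤ prb p A :=
  Finset.sum_nonneg fun ω _ => by split_ifs; exacts [hp0 ω, le_rfl]

theorem le_prb {Ω : Type} [Fintype Ω] {p : Ω → ℝ} (hp0 : ∀ ω, 0 ≤ p ω) {A : Set Ω} {ω : Ω}
    (h : ω ∈ A) : p ω ≤ prb p A := by
  have := Finset.single_le_sum (f := fun ω => if ω ∈ A then p ω else 0)
    (fun ω _ => by split_ifs; exacts [hp0 ω, le_rfl]) (Finset.mem_univ ω)
  simpa [h, prb] using this

theorem sum_prb_fibers {Ω V : Type} [Fintype Ω] [Fintype V] {p : Ω → ℝ}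
    (hp1 : ∑ ω, p ω = 1) (X : Ω → V) : ∑ v, prb p {ω | X ω = v} = 1 := by
  simpa [hp1] using sum_prb_mul p X (fun _ => 1)

/-- Monotonicity of entropy; that `X` is a function of `Y` is expressed by saying that equal values of
`Y` force equal values of `X`. -/
theorem ent_le_of_determines {Ω V W : Type} [Fintype Ω] [Fintype V] [Fintype W] {p : Ω → ℝ}
    (hp0 : ∀ ω, 0 ≤ p ω) (X : Ω → V) (Y : Ω → W) (h : ∀ ω ω', Y ω = Y ω' → X ω = X ω') :
    ent p X ≤ ent p Y := by
  rw [ent_eq_sum_sample, ent_eq_sum_sample, neg_le_neg_iff]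
  refine Finset.sum_le_sum fun ω _ => ?_
  rcases (hp0 ω).eq_or_lt with h0 | h0
  · simp [← h0]
  refine mul_le_mul_of_nonneg_left ?_ h0.le
  exact Real.logb_le_logb_of_le (by norm_num) (h0.trans_le (le_prb hp0 rfl))
    (prb_mono hp0 fun ω' h' => h ω' ω h')

/-- Subadditivity of entropy: `∑ p log (P_X P_Y / P_{XY}) ≤ ∑ p (P_X P_Y / P_{XY} - 1) ≤ 0`, where
the last step regroups the sum over sample points by the values of `(X, Y)`. -/
theorem ent_pair_le {Ω V W : Type} [Fintype Ω] [Fintype V] [Fintype W] {p : Ω → ℝ}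
    (hp0 : ∀ ω, 0 ≤ p ω) (hp1 : ∑ ω, p ω = 1) (X : Ω → V) (Y : Ω → W) :
    ent p (fun ω => (X ω, Y ω)) ≤ ent p X + ent p Y := by
  set PX : V → ℝ := fun v => prb p {ω | X ω = v} with hPX
  set PY : W → ℝ := fun w => prb p {ω | Y ω = w} with hPY
  set PZ : V × W → ℝ := fun u => prb p {ω | (X ω, Y ω) = u} with hPZ
  have regroup : ∑ ω, p ω * (PX (X ω) * PY (Y ω) / PZ (X ω, Y ω)) ≤ 1 := by
    rw [← sum_prb_mul p (fun ω => (X ω, Y ω)) (fun u => PX u.1 * PY u.2 / PZ u)]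
    calc ∑ u, PZ u * (PX u.1 * PY u.2 / PZ u) ≤ ∑ u : V × W, PX u.1 * PY u.2 := by
          refine Finset.sum_le_sum fun u _ => ?_
          have hXY : 0 ≤ PX u.1 * PY u.2 := mul_nonneg (prb_nonneg hp0 _) (prb_nonneg hp0 _)
          rcases eq_or_ne (PZ u) 0 with h | h
          · simpa [h] using hXY
          · rw [mul_div_cancel₀ _ h]
      _ = (∑ v, PX v) * ∑ w, PY w := by
          rw [Fintype.sum_prod_type, Finset.sum_mul_sum]
      _ = 1 := by rw [hPX, hPY, sum_prb_fibers hp1, sum_prb_fibers hp1, one_mul]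
  have pointwise : ∀ ω, p ω * (Real.log (PX (X ω)) + Real.log (PY (Y ω))
      - Real.log (PZ (X ω, Y ω))) ≤ p ω * (PX (X ω) * PY (Y ω) / PZ (X ω, Y ω)) - p ω := by
    intro ω
    rcases (hp0 ω).eq_or_lt with h0 | h0
    · simp [← h0]
    have hX : 0 < PX (X ω) := h0.trans_le (le_prb hp0 rfl)
    have hY : 0 < PY (Y ω) := h0.trans_le (le_prb hp0 rfl)
    have hZ : 0 < PZ (X ω, Y ω) := h0.trans_le (le_prb hp0 rfl)
    rw [← Real.log_mul hX.ne' hY.ne', ← Real.log_div (mul_pos hX hY).ne' hZ.ne']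
    have := mul_le_mul_of_nonneg_left
      (Real.log_le_sub_one_of_pos (div_pos (mul_pos hX hY) hZ)) h0.le
    linarith
  have total := Finset.sum_le_sum fun ω (_ : ω ∈ Finset.univ) => pointwise ω
  rw [Finset.sum_sub_distrib, hp1] at total
  have gap : ent p (fun ω => (X ω, Y ω)) - (ent p X + ent p Y)
      = (∑ ω, p ω * (Real.log (PX (X ω)) + Real.log (PY (Y ω))
          - Real.log (PZ (X ω, Y ω)))) / Real.log 2 := by
    simp only [ent_eq_sum_sample, Real.logb, mul_add, mul_sub, Finset.sum_add_distrib,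
      Finset.sum_sub_distrib, mul_div_assoc', ← Finset.sum_div]
    simp only [hPX, hPY, hPZ]
    ring
  have : ent p (fun ω => (X ω, Y ω)) - (ent p X + ent p Y) ≤ 0 := by
    rw [gap]
    exact div_nonpos_of_nonpos_of_nonneg (by linarith) (Real.log_nonneg (by norm_num))
  linarith

theorem ent_shares_union_le {Ω : Type} [Fintype Ω] {p : Ω → ℝ}
    (hp0 : ∀ ω, 0 ≤ p ω) (hp1 : ∑ ω, p ω = 1) {T : ℕ}
    {χ : Fin T → Type} [∀ t, Fintype (χ t)] (M : ∀ t, Ω → χ t) (A B : Finset (Fin T)) :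
    ent p (shares M (A ∪ B)) ≤ ent p (shares M A) + ∑ t ∈ B, ent p (M t) := by
  induction B using Finset.induction_on with
  | empty =>
    rw [Finset.sum_empty, add_zero]
    refine ent_le_of_determines hp0 _ _ fun ω ω' h => ?_
    funext t
    exact congrFun h ⟨t.1, by simpa using t.2⟩
  | insert b B hb ih =>
    rw [Finset.sum_insert hb]
    have h1 : ent p (shares M (A ∪ insert b B))
        ≤ ent p (fun ω => (M b ω, shares M (A ∪ B) ω)) := by
      refine ent_le_of_determines hp0 _ _ fun ω ω' h => ?_
      obtain ⟨hb', hS⟩ := Prod.mk.inj h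
      funext ⟨t, ht⟩
      rw [Finset.union_insert, Finset.mem_insert] at ht
      rcases ht with rfl | ht
      · exact hb'
      · exact congrFun hS ⟨t, ht⟩
    have h2 := ent_pair_le hp0 hp1 (M b) (shares M (A ∪ B))
    linarith

/-- Any `τ - z` shares have total entropy at least `(1 - α) H(F)`. -/
theorem le_sum_of_card_eq {Ω : Type} [Fintype Ω] {p : Ω → ℝ}
    (hp0 : ∀ ω, 0 ≤ p ω) (hp1 : ∑ ω, p ω = 1)
    {T τ z : ℕ} (hτT : τ ≤ T) (hz1 : 1 ≤ z) (hzτ : z < τ) {α : ℝ}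
    {𝔽 : Type} [Fintype 𝔽] (F : Ω → 𝔽)
    {χ : Fin T → Type} [∀ t, Fintype (χ t)] (M : ∀ t, Ω → χ t)
    (hrec : ∀ S : Finset (Fin T), τ ≤ S.card → condEnt p F (shares M S) = 0)
    (hpriv : ∀ S : Finset (Fin T), S.Nonempty → S.card ≤ z →
      mutInf p F (shares M S) ≤ α * ent p F)
    (B : Finset (Fin T)) (hB : B.card = τ - z) :
    (1 - α) * ent p F ≤ ∑ t ∈ B, ent p (M t) := by
  obtain ⟨A, hAB, hA⟩ : ∃ A ⊆ Bᶜ, A.card = z := by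
    refine Finset.exists_subset_card_eq ?_
    rw [Finset.card_compl, Fintype.card_fin]
    omega
  have hdisj : Disjoint A B := Finset.subset_compl_iff_disjoint_right.mp hAB
  have hprivA := hpriv A (Finset.card_pos.mp (by omega)) hA.le
  have hrecAB := hrec (A ∪ B) (by rw [Finset.card_union_of_disjoint hdisj]; omega)
  have hmono : ent p (fun ω => (F ω, shares M A ω))
      ≤ ent p (fun ω => (F ω, shares M (A ∪ B) ω)) := by
    refine ent_le_of_determines hp0 _ _ fun ω ω' h => ?_
    obtain ⟨hF, hS⟩ := Prod.mk.inj h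
    refine Prod.ext hF (funext fun t => ?_)
    exact congrFun hS ⟨t.1, Finset.mem_union_left _ t.2⟩
  have hsub := ent_shares_union_le hp0 hp1 M A B
  unfold mutInf at hprivA
  unfold condEnt at hrecAB
  linarith

/-- If every `k`-element set has `h`-sum at least `c`, then `n c` is at most `k` times the total:
each index lies in exactly `k` of the `n` cyclic shifts of a fixed `k`-element set. -/
theorem card_mul_sum_ge {n k : ℕ} [NeZero n] (hk : k ≤ n) (h : Fin n → ℝ) (c : ℝ)
    (hc : ∀ B : Finset (Fin n), B.card = k → c ≤ ∑ t ∈ B, h t) :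
    (n : ℝ) * c ≤ k * ∑ t, h t := by
  obtain ⟨B, -, hB⟩ : ∃ B ⊆ (Finset.univ : Finset (Fin n)), B.card = k :=
    Finset.exists_subset_card_eq (by simpa using hk)
  have shift : ∀ i : Fin n, c ≤ ∑ j ∈ B, h (j + i) := by
    intro i
    have := hc (B.map (Equiv.addRight i).toEmbedding) (by rw [Finset.card_map, hB])
    simpa [Finset.sum_map] using this
  calc (n : ℝ) * c = ∑ _i : Fin n, c := by simp
    _ ≤ ∑ i : Fin n, ∑ j ∈ B, h (j + i) := Finset.sum_le_sum fun i _ => shift i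
    _ = ∑ j ∈ B, ∑ i : Fin n, h (j + i) := Finset.sum_comm
    _ = ∑ _j ∈ B, ∑ t, h t :=
        Finset.sum_congr rfl fun j _ => Equiv.sum_comp (Equiv.addLeft j) h
    _ = k * ∑ t, h t := by simp [hB]

/-- Under recoverability and `(α, z)`-privacy (no leakage symmetry),
the sum of the share entropies satisfies
`Σ_t H(M_t) ≥ T · ((1 - α) / (τ - z)) · H(F)`. -/
theorem sum_share_lower_bound_privacy
    {Ω : Type} [Fintype Ω] (p : Ω → ℝ)
    (hp0 : ∀ ω, 0 ≤ p ω) (hp1 : ∑ ω, p ω = 1)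
    {T : ℕ} (hT : 2 ≤ T) {τ z : ℕ} (hτ1 : 1 ≤ τ) (hτT : τ ≤ T)
    (hz1 : 1 ≤ z) (hzτ : z < τ)
    {α : ℝ} (hα0 : 0 ≤ α) (hα1 : α ≤ 1)
    {𝔽 : Type} [Fintype 𝔽] (F : Ω → 𝔽) (hF : 0 < ent p F)
    {χ : Fin T → Type} [∀ t, Fintype (χ t)] (M : ∀ t, Ω → χ t)
    (hrec : ∀ S : Finset (Fin T), τ ≤ S.card → condEnt p F (shares M S) = 0)
    (hpriv : ∀ S : Finset (Fin T), S.Nonempty → S.card ≤ z →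
      mutInf p F (shares M S) ≤ α * ent p F) :
    ∑ t : Fin T, ent p (M t) ≥ (T : ℝ) * ((1 - α) / ((τ : ℝ) - (z : ℝ))) * ent p F := by
  have : NeZero T := ⟨by omega⟩
  have key := card_mul_sum_ge (k := τ - z) (by omega) (fun t => ent p (M t)) _
    (le_sum_of_card_eq hp0 hp1 hτT hz1 hzτ F M hrec hpriv)
  rw [Nat.cast_sub hzτ.le] at key
  have hpos : (0 : ℝ) < (τ : ℝ) - z := sub_pos.mpr (by exact_mod_cast hzτ)
  rw [ge_iff_le, mul_div_assoc', div_mul_eq_mul_div, div_le_iff₀ hpos]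
  linarith

end
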